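/- Suppose that F is a π-tree on a topological space X such that cofin(ω) ≫ Rise_F(X), and A ⊆ X is at most countable. Then there exists a π-tree H on the subspace X \ A such that cofin({2n+1 : n ∈ ω}) ≫ Rise_H(X \ A). -/

import Mathlib

open Set

universe u v

/-- A family `γ` π-refines `δ`: every nonempty member of `δ` contains a
nonempty member of `γ`. -/
def PiRefines {α : Type*} (γ δ : Set (Set α)) : Prop :=
  ∀ D ∈ δ, D.Nonempty → ∃ G ∈ γ, G.Nonempty ∧ G ⊆ D

/-- The finite intersection property. -/
def HasFIP {α : Type*} (γ : Set (Set α)) : Prop :=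
  ∀ δ : Set (Set α), δ ⊆ γ → δ.Finite → δ.Nonempty → (⋂₀ δ).Nonempty

/-- `cofin A` is the family of complements in `A` of finite subsets of `A`. -/
def cofin (A : Set ℕ) : Set (Set ℕ) :=
  {B | ∃ C : Set ℕ, C.Finite ∧ C ⊆ A ∧ B = A \ C}

/-- A foliage tree on `X`: a set-theoretic tree (strict partial order with
well-ordered sets of strict predecessors) with a leaf (a subset of `X`)
attached to each node. -/
structure FoliageTree (X : Type u) where
  Node : Type
  lt : Node → Node → Prop
  lt_irrefl : ∀ a, ¬ lt a a
  lt_trans : ∀ {a b c}, lt a b → lt b c → lt a c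
  wellOrdered : ∀ a : Node, IsWellOrder {b : Node // lt b a} fun x y => lt x.1 y.1
  leaf : Node → Set X

/-- Strict proper-extension order on finite sequences of naturals. -/
def seqLT (a b : List ℕ) : Prop := a <+: b ∧ a ≠ b

namespace FoliageTree

variable {X : Type u}

/-- The sons (immediate successors) of a node. -/
def Sons (F : FoliageTree X) (x : F.Node) : Set F.Node :=
  {s | F.lt x s ∧ ¬ ∃ t, F.lt x t ∧ F.lt t s}

/-- A node is maximal if it has no strict successor. -/
def IsMaxNode (F : FoliageTree X) (x : F.Node) : Prop := ¬ ∃ s, F.lt x s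

/-- A chain of nodes. -/
def IsChainN (F : FoliageTree X) (C : Set F.Node) : Prop :=
  ∀ x ∈ C, ∀ y ∈ C, F.lt x y ∨ x = y ∨ F.lt y x

/-- A branch is a maximal chain. -/
def IsBranch (F : FoliageTree X) (B : Set F.Node) : Prop :=
  F.IsChainN B ∧ ∀ C, F.IsChainN C → B ⊆ C → B = C

/-- The height of a node: the order type of its set of strict predecessors. -/
noncomputable def height (F : FoliageTree X) (v : F.Node) : Ordinal :=
  @Ordinal.type {b : F.Node // F.lt b v} (fun x y => F.lt x.1 y.1) (F.wellOrdered v)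

/-- `shoot F v`: unions of leaves over cofinite sets of sons of `v`. -/
def shoot (F : FoliageTree X) (v : F.Node) : Set (Set X) :=
  {S | ∃ C : Set F.Node, C ⊆ F.Sons v ∧ (F.Sons v \ C).Finite ∧ S = ⋃ s ∈ C, F.leaf s}

/-- `scope F p`: the nodes whose leaf contains `p`. -/
def scope (F : FoliageTree X) (p : X) : Set F.Node := {x | p ∈ F.leaf x}

/-- The union of all leaves. -/
def flesh (F : FoliageTree X) : Set X := ⋃ x, F.leaf x

/-- `F` is a foliage `ω,ω`-tree: its skeleton is order-isomorphic to
`(ω^{<ω}, ⊂)`. -/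
def IsOmegaOmegaTree (F : FoliageTree X) : Prop := Nonempty (F.lt ≃r seqLT)

/-- `F` is locally strict: the leaf of every non-maximal node is the disjoint
union of the leaves of its sons. -/
def LocallyStrict (F : FoliageTree X) : Prop :=
  ∀ x, ¬ F.IsMaxNode x →
    F.leaf x = (⋃ s ∈ F.Sons x, F.leaf s) ∧
      ∀ s ∈ F.Sons x, ∀ t ∈ F.Sons x, s ≠ t → Disjoint (F.leaf s) (F.leaf t)

/-- `F` has strict branches: it has nodes, and along every branch the
intersection of the leaves is a singleton. -/
def StrictBranches (F : FoliageTree X) : Prop :=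
  Nonempty F.Node ∧ ∀ B, F.IsBranch B → ∃ p, (⋂ x ∈ B, F.leaf x) = {p}

/-- `r` is the root: the least node. -/
def IsRoot (F : FoliageTree X) (r : F.Node) : Prop := ∀ x, r = x ∨ F.lt r x

/-- All leaves are open. -/
def OpenIn [TopologicalSpace X] (F : FoliageTree X) : Prop := ∀ x, IsOpen (F.leaf x)

/-- `F` is a Baire foliage tree on `X`. -/
def IsBaireFoliageTree [TopologicalSpace X] (F : FoliageTree X) : Prop :=
  F.OpenIn ∧ F.LocallyStrict ∧ F.IsOmegaOmegaTree ∧ F.StrictBranches ∧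
    ∃ r, F.IsRoot r ∧ F.leaf r = Set.univ

/-- `F` grows into `X`. -/
def GrowsInto [TopologicalSpace X] (F : FoliageTree X) : Prop :=
  ∀ p : X, ∀ U ∈ nhds p, ∃ z ∈ F.scope p, PiRefines (F.shoot z) {U}

/-- `F` is a π-tree on `X`. -/
def IsPiTree [TopologicalSpace X] (F : FoliageTree X) : Prop :=
  F.IsBaireFoliageTree ∧ F.GrowsInto

/-- `rise F p U`: the set of (finite) heights of nodes `v` whose leaf contains
`p` and whose shoot π-refines `{U}`. -/
noncomputable def rise (F : FoliageTree X) (p : X) (U : Set X) : Set ℕ :=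
  {n | ∃ v ∈ F.scope p, PiRefines (F.shoot v) {U} ∧ F.height v = (n : Ordinal)}

/-- `Rise F`: all sets `rise F p U` for `p ∈ X` and `U` a neighbourhood of `p`. -/
def Rise [TopologicalSpace X] (F : FoliageTree X) : Set (Set ℕ) :=
  {R | ∃ p U, U ∈ nhds p ∧ R = F.rise p U}

end FoliageTree

/-!
A Baire foliage tree on `X` is the same thing as a continuous bijection of `X` onto Baire space,
the leaves being the preimages of the cylinders. To remove the points `a 0, a 1, …` of `A`, split at
stage `n` each cylinder containing `a n`, minus this point, first by the number `i` of further terms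
shared with `a n` and then by the term at which the sequence leaves `a n`, numbered `j`; split the
other cylinders twice in the ordinary way. Since every stage prolongs the sequences, each point of
`X \ A` is thereby coded by a sequence of pairs `(i, j)`, and conversely. Letting `i` and `j` take
turns gives a coding by natural numbers. When `i` has been chosen at stage `n`, the pieces for the
various `j` lie in the leaves at distinct sons of a single node of the original tree, of height at
least `n`. Hence the shoot of this node passes to the node of height `2 * n + 1` in the new tree.
As a neighbourhood is π-refined by the shoots at all large heights in the original tree, it is so at
all large odd heights in the new one.
-/

section Cylinders

open PiNat

variable {α : Type*} {s t : List α} {x y : ℕ → α}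

/-- The cylinder of all sequences with initial segment `s`. As in `PiNat.res`, initial segments
are stored with the last entry first, so that the sons of `s` are the lists `k :: s`. -/
def listCylinder (s : List α) : Set (ℕ → α) := {x | res x s.length = s}

lemma mem_listCylinder : x ∈ listCylinder s ↔ res x s.length = s := Iff.rfl

@[simp]
lemma listCylinder_nil : listCylinder ([] : List α) = univ := by
  ext x
  simp [mem_listCylinder]

@[simp]
lemma mem_listCylinder_cons {k : α} :
    x ∈ listCylinder (k :: s) ↔ x s.length = k ∧ x ∈ listCylinder s := by
  simp [mem_listCylinder]

lemma pairwise_disjoint_listCylinder_cons (s : List α) :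
    Pairwise fun k l => Disjoint (listCylinder (k :: s)) (listCylinder (l :: s)) :=
  fun _ _ hne => disjoint_left.2 fun _ hk hl =>
    hne ((mem_listCylinder_cons.1 hk).1.symm.trans (mem_listCylinder_cons.1 hl).1)

lemma mem_listCylinder_res {n : ℕ} : y ∈ listCylinder (res x n) ↔ res y n = res x n := by
  simp [mem_listCylinder]

lemma self_mem_listCylinder_res (x : ℕ → α) (n : ℕ) : x ∈ listCylinder (res x n) :=
  mem_listCylinder_res.2 rfl

lemma listCylinder_res (x : ℕ → α) (n : ℕ) : listCylinder (res x n) = cylinder x n := by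
  ext y
  rw [mem_listCylinder_res, cylinder_eq_res, Set.mem_ofPred_eq]

lemma listCylinder_anti (h : s <:+ t) : listCylinder t ⊆ listCylinder s := by
  obtain ⟨r, rfl⟩ := h
  induction r with
  | nil => rfl
  | cons k r ih => exact fun x hx => ih (mem_listCylinder_cons.1 hx).2

lemma mem_listCylinder_of_mem_res {n : ℕ} (hs : y ∈ listCylinder s)
    (hy : y ∈ listCylinder (res x n)) (hn : s.length ≤ n) : x ∈ listCylinder s := by
  have hxy := res_eq_res.1 (mem_listCylinder_res.1 hy)
  rw [mem_listCylinder] at hs ⊢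
  rw [← hs, res_length]
  exact res_eq_res.2 fun m hm => (hxy (hm.trans_le hn)).symm

lemma res_suffix_res (x : ℕ → α) {m n : ℕ} (h : m ≤ n) : res x m <:+ res x n := by
  induction n, h using Nat.le_induction with
  | base => exact List.suffix_rfl
  | succ n _ ih => exact ih.trans (List.suffix_cons _ _)

lemma listCylinder_nonempty [Nonempty α] (s : List α) : (listCylinder s).Nonempty := by
  induction s with
  | nil => simp
  | cons k s ih =>
    obtain ⟨x, hx⟩ := ih
    refine ⟨Function.update x s.length k, ?_⟩
    rw [mem_listCylinder_cons, mem_listCylinder, Function.update_self]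
    refine ⟨rfl, (res_eq_res.2 fun m hm => ?_).trans hx⟩
    rw [Function.update_of_ne hm.ne]

lemma isOpen_listCylinder [TopologicalSpace α] [DiscreteTopology α] (s : List α) :
    IsOpen (listCylinder s) := by
  induction s with
  | nil => simp
  | cons k s ih =>
    have hcons : listCylinder (k :: s) = (fun x => x s.length) ⁻¹' {k} ∩ listCylinder s := by
      ext x
      simp
    rw [hcons]
    exact ((isOpen_discrete _).preimage (continuous_apply _)).inter ih

lemma continuous_of_isOpen_preimage_listCylinder {X : Type*} [TopologicalSpace X]
    [TopologicalSpace α] [DiscreteTopology α] {f : X → ℕ → α}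
    (hf : ∀ s, IsOpen (f ⁻¹' listCylinder s)) : Continuous f := by
  refine (isTopologicalBasis_cylinders fun _ => α).continuous_iff.2 ?_
  rintro _ ⟨x, n, rfl⟩
  rw [← listCylinder_res]
  exact hf _

lemma exists_iInter_listCylinder_eq_singleton {B : Set (List α)} (hB : IsChain (· <:+ ·) B)
    (hunb : ∀ n, ∃ s ∈ B, n < s.length) : ∃ x, ⋂ s ∈ B, listCylinder s = {x} := by
  choose t htB htl using hunb
  have : Nonempty α := ⟨(t 0).head (List.ne_nil_of_length_pos (htl 0))⟩
  choose y hy using fun s : List α => listCylinder_nonempty s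
  have agree : ∀ s ∈ B, ∀ i < s.length, y (t i) i = y s i := by
    intro s hs i hi
    rcases hB.total (htB i) hs with h | h
    · exact res_eq_res.1 ((hy (t i)).trans (listCylinder_anti h (hy s)).symm) (htl i)
    · exact res_eq_res.1 ((listCylinder_anti h (hy (t i))).trans (hy s).symm) hi
  refine ⟨fun i => y (t i) i, eq_singleton_iff_unique_mem.2 ⟨?_, fun x hx => ?_⟩⟩
  · exact mem_iInter₂.2 fun s hs => (res_eq_res.2 fun i hi => agree s hs i hi).trans (hy s)
  · funext i
    have hxi : x ∈ listCylinder (t i) := mem_iInter₂.1 hx (t i) (htB i)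
    exact res_eq_res.1 (hxi.trans (hy (t i)).symm) (htl i)

end Cylinders

section LusinSchemes

open PiNat

variable {X β : Type*} {S : List β → Set X}

/-- A family of sets indexed by finite sequences which splits `X` step by step into disjoint
pieces, each infinite sequence of choices ending in a single point. -/
structure IsLusinScheme (S : List β → Set X) : Prop where
  nil : S [] = univ
  eq_iUnion : ∀ t, S t = ⋃ b, S (b :: t)
  disjoint : CantorScheme.Disjoint S
  iInter_res : ∀ z : ℕ → β, ∃ p, ⋂ n, S (res z n) = {p}

namespace IsLusinScheme

lemma eq_of_mem (hS : IsLusinScheme S) {p : X} :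
    ∀ {s t : List β}, p ∈ S s → p ∈ S t → s.length = t.length → s = t
  | [], [], _, _, _ => rfl
  | b :: s, c :: t, hs, ht, h => by
    have mem_tail : ∀ {b t}, p ∈ S (b :: t) → p ∈ S t := fun {b t} hp =>
      hS.eq_iUnion t ▸ mem_iUnion_of_mem b hp
    obtain rfl := hS.eq_of_mem (mem_tail hs) (mem_tail ht) (Nat.succ.inj h)
    rw [(hS.disjoint s).eq (not_disjoint_iff.2 ⟨p, hs, ht⟩)]

lemma exists_mem_res (hS : IsLusinScheme S) (p : X) : ∃ z : ℕ → β, ∀ n, p ∈ S (res z n) := by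
  have hnext : ∀ t : {t // p ∈ S t}, ∃ b, p ∈ S (b :: t.1) := fun t =>
    mem_iUnion.1 (hS.eq_iUnion t.1 ▸ t.2)
  choose b hb using hnext
  let t (n : ℕ) : {t // p ∈ S t} :=
    (fun t => ⟨b t :: t.1, hb t⟩)^[n] ⟨[], hS.nil ▸ mem_univ p⟩
  have ht : ∀ n, res (fun i => b (t i)) n = (t n).1 := by
    intro n
    induction n with
    | zero => rfl
    | succ n ih => simp only [res_succ, ih, t, Function.iterate_succ_apply']
  exact ⟨fun i => b (t i), fun n => ht n ▸ (t n).2⟩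

theorem exists_equiv (hS : IsLusinScheme S) :
    ∃ c : X ≃ (ℕ → β), ∀ t, S t = c ⁻¹' listCylinder t := by
  choose point hpoint using hS.iInter_res
  have point_mem : ∀ z n, point z ∈ S (res z n) := fun z =>
    mem_iInter.1 (hpoint z ▸ mem_singleton _)
  have hinj : Function.Injective point := fun z w h => res_injective <| funext fun n =>
    hS.eq_of_mem (point_mem z n) (h ▸ point_mem w n) (by simp)
  have hsurj : Function.Surjective point := fun p => by
    obtain ⟨z, hz⟩ := hS.exists_mem_res p
    have hp : p ∈ ⋂ n, S (res z n) := mem_iInter.2 hz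
    rw [hpoint z] at hp
    exact ⟨z, hp.symm⟩
  let E := Equiv.ofBijective point ⟨hinj, hsurj⟩
  refine ⟨E.symm, fun t => ext fun p => ?_⟩
  obtain ⟨z, rfl⟩ := E.surjective p
  rw [mem_preimage, Equiv.symm_apply_apply, mem_listCylinder]
  constructor
  · exact fun hz => hS.eq_of_mem (point_mem z _) hz (res_length z _)
  · intro hz
    rw [← hz]
    exact point_mem z _

end IsLusinScheme

end LusinSchemes

section Removal

open Filter PiNat

variable {A : Set (ℕ → ℕ)} {a : ℕ → ℕ} {s : List ℕ} {x : ℕ → ℕ}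

open Classical in
/-- The `i`-th intermediate piece in the splitting of `listCylinder s` that removes `a`: sequences
following `a` for `i` more terms, to be followed by a deviation from `a`. If `a` does not have to be
removed from `listCylinder s`, the pieces are the sons of `s`. -/
noncomputable def removalStem (A : Set (ℕ → ℕ)) (a : ℕ → ℕ) (s : List ℕ) (i : ℕ) : List ℕ :=
  if a ∈ A ∩ listCylinder s then res a (s.length + i) else i :: s

/-- The increasing enumeration of the sons of `removalStem A a s i` which do not contain a point
`a` to be removed. -/
noncomputable def removalLabel (A : Set (ℕ → ℕ)) (a : ℕ → ℕ) (s : List ℕ) (i : ℕ) : ℕ → ℕ :=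
  Nat.nth fun l => a ∈ A → a ∉ listCylinder (l :: removalStem A a s i)

/-- The pieces into which `listCylinder s` splits, up to the point `a` if it lies in `A`. -/
noncomputable def removalSon (A : Set (ℕ → ℕ)) (a : ℕ → ℕ) (s : List ℕ) (b : ℕ × ℕ) : List ℕ :=
  removalLabel A a s b.1 b.2 :: removalStem A a s b.1

lemma removalStem_of_mem (h : a ∈ A ∩ listCylinder s) (i : ℕ) :
    removalStem A a s i = res a (s.length + i) := if_pos h

lemma removalStem_of_notMem (h : a ∉ A ∩ listCylinder s) (i : ℕ) :
    removalStem A a s i = i :: s := if_neg h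

lemma suffix_removalStem (A : Set (ℕ → ℕ)) (a : ℕ → ℕ) (s : List ℕ) (i : ℕ) :
    s <:+ removalStem A a s i := by
  by_cases h : a ∈ A ∩ listCylinder s
  · rw [removalStem_of_mem h]
    nth_rw 1 [← mem_listCylinder.1 h.2]
    exact res_suffix_res a (Nat.le_add_right _ _)
  · rw [removalStem_of_notMem h]
    exact List.suffix_cons i s

lemma suffix_removalSon (A : Set (ℕ → ℕ)) (a : ℕ → ℕ) (s : List ℕ) (b : ℕ × ℕ) :
    s <:+ removalSon A a s b :=
  (suffix_removalStem A a s b.1).trans (List.suffix_cons _ _)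

lemma length_lt_length_removalSon (A : Set (ℕ → ℕ)) (a : ℕ → ℕ) (s : List ℕ) (b : ℕ × ℕ) :
    s.length < (removalSon A a s b).length :=
  Nat.lt_succ_of_le (suffix_removalStem A a s b.1).length_le

lemma infinite_setOf_notMem_listCylinder_cons (A : Set (ℕ → ℕ)) (a : ℕ → ℕ) (t : List ℕ) :
    {l | a ∈ A → a ∉ listCylinder (l :: t)}.Infinite := by
  refine Infinite.mono (fun l hl => ?_) (finite_singleton (a t.length)).infinite_compl
  exact fun _ ha => hl (mem_listCylinder_cons.1 ha).1.symm

lemma strictMono_removalLabel (A : Set (ℕ → ℕ)) (a : ℕ → ℕ) (s : List ℕ) (i : ℕ) :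
    StrictMono (removalLabel A a s i) :=
  Nat.nth_strictMono (infinite_setOf_notMem_listCylinder_cons A a _)

lemma notMem_listCylinder_removalSon (ha : a ∈ A) (b : ℕ × ℕ) :
    a ∉ listCylinder (removalSon A a s b) :=
  Nat.nth_mem_of_infinite (infinite_setOf_notMem_listCylinder_cons A a _) b.2 ha

lemma exists_mem_listCylinder_removalStem (hs : x ∈ listCylinder s) (hx : x ∉ A) :
    ∃ i, x ∈ listCylinder (removalStem A a s i) ∧
      (a ∈ A → a ∉ listCylinder (x (removalStem A a s i).length :: removalStem A a s i)) := by
  by_cases h : a ∈ A ∩ listCylinder s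
  · have hne : x ≠ a := fun hxa => hx (hxa ▸ h.1)
    have hle : s.length ≤ firstDiff x a := by
      rw [← mem_cylinder_iff_le_firstDiff hne, ← listCylinder_res, mem_listCylinder_res]
      exact hs.trans h.2.symm
    refine ⟨firstDiff x a - s.length, ?_⟩
    rw [removalStem_of_mem h, Nat.add_sub_cancel' hle, res_length]
    refine ⟨mem_listCylinder_res.2 (res_eq_res.2 fun m hm => apply_eq_of_lt_firstDiff hm), ?_⟩
    intro _ ha
    rw [mem_listCylinder_cons, res_length] at ha
    exact apply_firstDiff_ne hne ha.1.symm
  · refine ⟨x s.length, ?_⟩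
    rw [removalStem_of_notMem h]
    refine ⟨mem_listCylinder_cons.2 ⟨rfl, hs⟩, fun ha has => h ⟨ha, ?_⟩⟩
    exact (mem_listCylinder_cons.1 (mem_listCylinder_cons.1 has).2).2

lemma exists_mem_listCylinder_removalSon (hs : x ∈ listCylinder s) (hx : x ∉ A) :
    ∃ b, x ∈ listCylinder (removalSon A a s b) := by
  obtain ⟨i, hi, ha⟩ := exists_mem_listCylinder_removalStem (a := a) hs hx
  have hrange := Nat.range_nth_of_infinite
    (infinite_setOf_notMem_listCylinder_cons A a (removalStem A a s i))
  obtain ⟨j, hj⟩ : x (removalStem A a s i).length ∈ range (removalLabel A a s i) :=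
    hrange.symm.subset ha
  exact ⟨(i, j), mem_listCylinder_cons.2 ⟨hj.symm, hi⟩⟩

lemma le_of_mem_listCylinder_removalStem {b : ℕ × ℕ} {i : ℕ}
    (hb : x ∈ listCylinder (removalSon A a s b)) (hi : x ∈ listCylinder (removalStem A a s i)) :
    i ≤ b.1 := by
  by_cases h : a ∈ A ∩ listCylinder s
  · by_contra! hlt
    rw [removalStem_of_mem h] at hi
    refine notMem_listCylinder_removalSon h.1 b (mem_listCylinder_of_mem_res hb hi ?_)
    rw [removalSon, removalStem_of_mem h, List.length_cons, res_length]
    exact Nat.add_lt_add_left hlt _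
  · have hb' := (mem_listCylinder_cons.1 hb).2
    rw [removalStem_of_notMem h, mem_listCylinder_cons] at hi hb'
    exact (hi.1.symm.trans hb'.1).le

lemma pairwise_disjoint_listCylinder_removalSon (A : Set (ℕ → ℕ)) (a : ℕ → ℕ) (s : List ℕ) :
    Pairwise fun b b' =>
      Disjoint (listCylinder (removalSon A a s b)) (listCylinder (removalSon A a s b')) := by
  rintro ⟨i, j⟩ ⟨i', j'⟩ hne
  refine disjoint_left.2 fun x hx hx' => hne ?_
  have hstem := (mem_listCylinder_cons.1 hx).2
  have hstem' := (mem_listCylinder_cons.1 hx').2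
  obtain rfl : i = i' := le_antisymm (le_of_mem_listCylinder_removalStem hx' hstem)
    (le_of_mem_listCylinder_removalStem hx hstem')
  have hlabel := (mem_listCylinder_cons.1 hx).1.symm.trans (mem_listCylinder_cons.1 hx').1
  obtain rfl : j = j' := (strictMono_removalLabel A a s i).injective hlabel
  rfl

/-- The scheme of finite sequences which removes the points `a 0, a 1, …` of `A` one at a time,
the `n`-th one in the passage from level `n` to level `n + 1`. -/
noncomputable def removalNode (A : Set (ℕ → ℕ)) (a : ℕ → ℕ → ℕ) : List (ℕ × ℕ) → List ℕ
  | [] => []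
  | b :: t => removalSon A (a t.length) (removalNode A a t) b

lemma length_le_length_removalNode (A : Set (ℕ → ℕ)) (a : ℕ → ℕ → ℕ) (t : List (ℕ × ℕ)) :
    t.length ≤ (removalNode A a t).length := by
  induction t with
  | nil => exact Nat.zero_le _
  | cons b t ih => exact ih.trans_lt (length_lt_length_removalSon A _ _ b)

lemma exists_iInter_listCylinder_removalNode {a : ℕ → ℕ → ℕ} (hA : A ⊆ range a)
    (z : ℕ → ℕ × ℕ) : ∃ x ∉ A, ⋂ n, listCylinder (removalNode A a (res z n)) = {x} := by
  let node (n : ℕ) : List ℕ := removalNode A a (res z n)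
  have hmono : ∀ {m n}, m ≤ n → node m <:+ node n := fun {m n} h => by
    induction n, h using Nat.le_induction with
    | base => exact List.suffix_rfl
    | succ n _ ih => exact ih.trans (suffix_removalSon A _ _ _)
  have hchain : IsChain (· <:+ ·) (range node) := by
    rintro _ ⟨m, rfl⟩ _ ⟨n, rfl⟩ -
    exact (le_total m n).imp hmono hmono
  have hunb : ∀ n, ∃ s ∈ range node, n < s.length := fun n =>
    ⟨node (n + 1), mem_range_self _, Nat.lt_of_succ_le <|
      (res_length z (n + 1)).ge.trans (length_le_length_removalNode A a _)⟩
  obtain ⟨x, hx⟩ := exists_iInter_listCylinder_eq_singleton hchain hunb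
  rw [biInter_range] at hx
  refine ⟨x, fun hxA => ?_, hx⟩
  obtain ⟨n, rfl⟩ := hA hxA
  have hn : a n ∈ listCylinder (node (n + 1)) := mem_iInter.1 (hx ▸ mem_singleton (a n)) (n + 1)
  simp only [node, res_succ, removalNode, res_length] at hn
  exact notMem_listCylinder_removalSon hxA _ hn

lemma isLusinScheme_removalNode {a : ℕ → ℕ → ℕ} (hA : A ⊆ range a) :
    IsLusinScheme fun t => ((↑) : ↥Aᶜ → ℕ → ℕ) ⁻¹' listCylinder (removalNode A a t) where
  nil := by simp [removalNode]
  eq_iUnion t := by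
    refine Subset.antisymm (fun x hx => ?_) (iUnion_subset fun b => ?_)
    · exact mem_iUnion.2 (exists_mem_listCylinder_removalSon hx x.2)
    · exact preimage_mono (listCylinder_anti (suffix_removalSon A _ _ b))
  disjoint t _ _ hne := (pairwise_disjoint_listCylinder_removalSon A _ _ hne).preimage _
  iInter_res z := by
    obtain ⟨x, hxA, hx⟩ := exists_iInter_listCylinder_removalNode hA z
    refine ⟨⟨x, hxA⟩, ?_⟩
    rw [← preimage_iInter, hx]
    ext y
    simp [Subtype.ext_iff]

/-- Along the sons of the node of height `n` over `c y`, the cylinders of `c` are contained in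
cylinders of `d` over the sons of the node of height `m` over `d y`, in a finite-to-one way. For the
cylinder trees of `c` and `d`, this carries π-refinement by shoots from height `m` to height `n`. -/
def ShootsInto {Y : Type*} (c d : Y → ℕ → ℕ) (y : Y) (n m : ℕ) : Prop :=
  ∃ φ : ℕ → ℕ, Tendsto φ atTop atTop ∧
    ∀ j, c ⁻¹' listCylinder (j :: res (c y) n) ⊆ d ⁻¹' listCylinder (φ j :: res (d y) m)

theorem exists_continuous_equiv_compl_prod (hA : A.Countable) :
    ∃ g : ↥Aᶜ ≃ (ℕ → ℕ × ℕ), Continuous g ∧ ∀ x k, ∃ m ≥ k, ∃ φ : ℕ → ℕ, Tendsto φ atTop atTop ∧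
      ∀ j, g ⁻¹' listCylinder (((g x k).1, j) :: res (g x) k) ⊆
        (↑) ⁻¹' listCylinder (φ j :: res (x : ℕ → ℕ) m) := by
  obtain ⟨a, ha⟩ := countable_iff_exists_subset_range.1 hA
  obtain ⟨g, hg⟩ := (isLusinScheme_removalNode ha).exists_equiv
  refine ⟨g, continuous_of_isOpen_preimage_listCylinder fun t => ?_, fun x k => ?_⟩
  · rw [← hg t]
    exact (isOpen_listCylinder _).preimage continuous_subtype_val
  · let s := removalNode A a (res (g x) k)
    let stem := removalStem A (a k) s (g x k).1
    have hnode (j : ℕ) : removalNode A a (((g x k).1, j) :: res (g x) k) =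
        removalLabel A (a k) s (g x k).1 j :: stem := by
      rw [removalNode, res_length, removalSon]
    have hx : (x : ℕ → ℕ) ∈ listCylinder stem := by
      have hxk : x ∈ g ⁻¹' listCylinder (res (g x) (k + 1)) := self_mem_listCylinder_res _ _
      rw [← hg, res_succ, ← Prod.mk.eta (p := g x k), hnode] at hxk
      exact (mem_listCylinder_cons.1 hxk).2
    refine ⟨stem.length, ?_, removalLabel A (a k) s (g x k).1,
      (strictMono_removalLabel ..).tendsto_atTop, fun j => ?_⟩
    · exact (res_length (g x) k).ge.trans <|
        (length_le_length_removalNode A a _).trans (suffix_removalStem ..).length_le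
    · rw [← hg, hnode, mem_listCylinder.1 hx]

/-- The bijection turning a sequence of pairs into the sequence of the first and second entries
of these pairs, in turn. -/
def interleave (α : Type*) : (ℕ → α × α) ≃ (ℕ → α) :=
  (Equiv.arrowProdEquivProdArrow ..).trans <|
    (Equiv.sumArrowEquivProdArrow ..).symm.trans (Equiv.natSumNatEquivNat.arrowCongr (.refl α))

@[simp]
lemma interleave_two_mul {α : Type*} (z : ℕ → α × α) (k : ℕ) :
    interleave α z (2 * k) = (z k).1 := by
  have hk : Equiv.natSumNatEquivNat.symm (2 * k) = .inl k := by simp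
  simp [interleave, hk, Equiv.arrowCongr, Equiv.sumArrowEquivProdArrow,
    Equiv.arrowProdEquivProdArrow]

@[simp]
lemma interleave_two_mul_add_one {α : Type*} (z : ℕ → α × α) (k : ℕ) :
    interleave α z (2 * k + 1) = (z k).2 := by
  have hk : Equiv.natSumNatEquivNat.symm (2 * k + 1) = .inr k := by simp
  simp [interleave, hk, Equiv.arrowCongr, Equiv.sumArrowEquivProdArrow,
    Equiv.arrowProdEquivProdArrow]

lemma continuous_interleave {α : Type*} [TopologicalSpace α] : Continuous (interleave α) := by
  refine continuous_pi fun n => ?_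
  obtain ⟨k, rfl | rfl⟩ := n.even_or_odd'
  · simp only [interleave_two_mul]
    fun_prop
  · simp only [interleave_two_mul_add_one]
    fun_prop

lemma mem_listCylinder_of_interleave_mem {α : Type*} {z w : ℕ → α × α} {k : ℕ} {j : α}
    (h : interleave α w ∈ listCylinder (j :: res (interleave α z) (2 * k + 1))) :
    w ∈ listCylinder (((z k).1, j) :: res z k) := by
  obtain ⟨hj, hres⟩ := mem_listCylinder_cons.1 h
  have heq := res_eq_res.1 (mem_listCylinder_res.1 hres)
  rw [res_length, interleave_two_mul_add_one] at hj
  have hfst : ∀ {i}, i ≤ k → (w i).1 = (z i).1 := fun {i} hi => by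
    simpa using heq (m := 2 * i) (by lia)
  have hsnd : ∀ {i}, i < k → (w i).2 = (z i).2 := fun {i} hi => by
    simpa using heq (m := 2 * i + 1) (by lia)
  rw [mem_listCylinder_cons, res_length, mem_listCylinder_res]
  exact ⟨Prod.ext (hfst le_rfl) hj,
    res_eq_res.2 fun i hi => Prod.ext (hfst hi.le) (hsnd hi)⟩

theorem exists_continuous_equiv_compl_shootsInto {X : Type*} [TopologicalSpace X]
    {c : X ≃ (ℕ → ℕ)} (hc : Continuous c) {A : Set X} (hA : A.Countable) :
    ∃ d : ↥Aᶜ ≃ (ℕ → ℕ), Continuous d ∧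
      ∀ x k, ∃ m ≥ k, ShootsInto d (c ∘ (↑)) x (2 * k + 1) m := by
  obtain ⟨g, hg, hsub⟩ := exists_continuous_equiv_compl_prod (hA.image c)
  let r : ↥Aᶜ ≃ ↥(c '' A)ᶜ := c.subtypeEquiv (by simp)
  have hr : Continuous r := (hc.comp continuous_subtype_val).subtype_mk _
  refine ⟨r.trans (g.trans (interleave ℕ)), continuous_interleave.comp (hg.comp hr), fun x k => ?_⟩
  obtain ⟨m, hm, φ, hφ, hcyl⟩ := hsub (r x) k
  exact ⟨m, hm, φ, hφ, fun j y hy => hcyl j (mem_listCylinder_of_interleave_mem hy)⟩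

end Removal

section StrictSuffix

variable {α : Type*} {s t : List α}

/-- The extension order of `ω^{<ω}` for finite sequences stored with the last entry first. -/
def StrictSuffix (s t : List α) : Prop := s <:+ t ∧ s ≠ t

lemma strictSuffix_iff_length_lt : StrictSuffix s t ↔ s <:+ t ∧ s.length < t.length :=
  and_congr_right fun h =>
    ⟨fun hne => h.length_le.lt_of_ne fun hl => hne (h.eq_of_length hl), fun hl hst => by simp_all⟩

lemma strictSuffix_cons (k : α) (s : List α) : StrictSuffix s (k :: s) :=
  strictSuffix_iff_length_lt.2 ⟨List.suffix_cons k s, Nat.lt_succ_self _⟩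

lemma StrictSuffix.exists_cons_suffix (h : StrictSuffix s t) : ∃ k, k :: s <:+ t := by
  obtain ⟨⟨r, rfl⟩, hne⟩ := h
  rcases r.eq_nil_or_concat with rfl | ⟨r, k, rfl⟩
  · exact absurd rfl hne
  · exact ⟨k, r, by simp⟩

/-- Reversing lists translates the encoding of `ω^{<ω}` with the last entry first. -/
def strictSuffixRelIsoSeqLT : StrictSuffix (α := ℕ) ≃r seqLT where
  toEquiv := List.reverse_involutive.toPerm
  map_rel_iff' := by simp [seqLT, StrictSuffix, Function.Involutive.toPerm]

/-- A sequence has one proper initial segment of each smaller length. -/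
def strictSuffixPredecessorsIso (t : List α) :
    (fun r s : {b // StrictSuffix b t} => StrictSuffix r.1 s.1) ≃r
      ((· < ·) : Fin t.length → Fin t.length → Prop) where
  toFun s := ⟨s.1.length, (strictSuffix_iff_length_lt.1 s.2).2⟩
  invFun i := ⟨t.drop (t.length - i),
    strictSuffix_iff_length_lt.2 ⟨List.drop_suffix _ _, by rw [List.length_drop]; lia⟩⟩
  left_inv s := Subtype.ext (List.suffix_iff_eq_drop.1 s.2.1).symm
  right_inv i := Fin.ext (List.length_drop.trans (by lia))
  map_rel_iff' {r s} := by
    refine ⟨fun h => ?_, fun h => (strictSuffix_iff_length_lt.1 h).2⟩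
    exact strictSuffix_iff_length_lt.2
      ⟨List.suffix_of_suffix_length_le r.2.1 s.2.1 (le_of_lt h), h⟩

end StrictSuffix

lemma piRefines_cofin_iff {A : Set ℕ} (hA : A.Infinite) {γ : Set (Set ℕ)} :
    PiRefines (cofin A) γ ↔ ∀ R ∈ γ, R.Nonempty → (A \ R).Finite := by
  refine forall₃_congr fun R _ _ => ⟨?_, fun hR => ?_⟩
  · rintro ⟨_, ⟨C, hC, -, rfl⟩, -, hsub⟩
    exact hC.subset (sdiff_subset_comm.1 hsub)
  · refine ⟨A \ (A \ R), ⟨A \ R, hR, sdiff_subset, rfl⟩, (hA.sdiff hR).nonempty, ?_⟩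
    exact sdiff_sdiff_right_self.trans_subset inter_subset_right

namespace FoliageTree

section Skeleton

open PiNat

variable {X : Type*} {F : FoliageTree X} (e : F.lt ≃r StrictSuffix (α := ℕ)) {B : Set F.Node}
  {v : F.Node}

lemma sons_eq_range (v : F.Node) : F.Sons v = range fun k => e.symm (k :: e v) := by
  refine Subset.antisymm (fun s ⟨hvs, hmin⟩ => ?_) ?_
  · obtain ⟨k, hk⟩ := (e.map_rel_iff.2 hvs).exists_cons_suffix
    refine ⟨k, e.symm_apply_eq.2 (by_contra fun hne => hmin ⟨e.symm (k :: e v), ?_, ?_⟩)⟩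
    · exact e.map_rel_iff.1 (by simpa using strictSuffix_cons k (e v))
    · exact e.map_rel_iff.1 (by simpa using ⟨hk, hne⟩)
  · rintro _ ⟨k, rfl⟩
    refine ⟨e.map_rel_iff.1 (by simpa using strictSuffix_cons k (e v)), ?_⟩
    rintro ⟨t, hvt, hts⟩
    have hvt' := (strictSuffix_iff_length_lt.1 (e.map_rel_iff.2 hvt)).2
    have hts' := (strictSuffix_iff_length_lt.1 (e.map_rel_iff.2 hts)).2
    rw [e.apply_symm_apply, List.length_cons] at hts'
    lia

lemma injective_symm_cons (v : F.Node) : Function.Injective fun k => e.symm (k :: e v) :=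
  e.symm.injective.comp fun _ _ h => (List.cons.inj h).1

lemma height_eq_length (v : F.Node) : F.height v = (e v).length := by
  have := F.wellOrdered v
  let predecessors : (fun x y : {b // F.lt b v} => F.lt x.1 y.1) ≃r
      (fun r s : {b // StrictSuffix b (e v)} => StrictSuffix r.1 s.1) :=
    ⟨e.toEquiv.subtypeEquiv fun _ => e.map_rel_iff.symm, e.map_rel_iff⟩
  rw [← Ordinal.type_fin]
  exact Ordinal.type_eq.2 ⟨predecessors.trans (strictSuffixPredecessorsIso (e v))⟩

lemma lt_or_eq_or_gt_iff {w : F.Node} :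
    F.lt v w ∨ v = w ∨ F.lt w v ↔ e v <:+ e w ∨ e w <:+ e v := by
  rw [← e.map_rel_iff, ← e.map_rel_iff (a := w), ← e.injective.eq_iff, StrictSuffix, StrictSuffix]
  by_cases h : e v = e w <;> simp [h, Ne.symm]

lemma isChainN_iff : F.IsChainN B ↔ ∀ v ∈ B, ∀ w ∈ B, e v <:+ e w ∨ e w <:+ e v := by
  simp only [IsChainN, lt_or_eq_or_gt_iff e]

lemma IsBranch.mem_of_forall_comparable (hB : F.IsBranch B)
    (hv : ∀ w ∈ B, e v <:+ e w ∨ e w <:+ e v) : v ∈ B := by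
  have hchain : F.IsChainN (insert v B) := by
    rw [isChainN_iff e]
    rintro x (rfl | hx) y (rfl | hy)
    · exact .inl List.suffix_rfl
    · exact hv y hy
    · exact (hv x hx).symm
    · exact (isChainN_iff e).1 hB.1 x hx y hy
  exact hB.2 _ hchain (subset_insert v B) ▸ mem_insert v B

lemma IsBranch.exists_le_length (hB : F.IsBranch B) (n : ℕ) : ∃ v ∈ B, n ≤ (e v).length := by
  induction n with
  | zero =>
    by_contra! h
    exact absurd (hB.mem_of_forall_comparable e (v := e.symm []) (by simp)) (by simpa using h _)
  | succ n ih =>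
    obtain ⟨v, hvB, hv⟩ := ih
    by_contra! h
    -- Then `v` is the longest node of `B`, so `B` could be prolonged by a son of `v`.
    have hmax : ∀ w ∈ B, e w <:+ 0 :: e v := fun w hw => by
      have hle : (e w).length ≤ (e v).length := (Nat.le_of_lt_succ (h w hw)).trans hv
      refine List.IsSuffix.trans ?_ (List.suffix_cons 0 (e v))
      rcases (isChainN_iff e).1 hB.1 w hw v hvB with hwv | hvw
      · exact hwv
      · exact (hvw.eq_of_length_le hle).symm ▸ List.suffix_rfl
    have hson := hB.mem_of_forall_comparable e (v := e.symm (0 :: e v))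
      fun w hw => .inr (by simpa using hmax w hw)
    have := h _ hson
    rw [e.apply_symm_apply, List.length_cons] at this
    lia

lemma isBranch_range_res (z : ℕ → ℕ) : F.IsBranch (range fun n => e.symm (res z n)) := by
  refine ⟨(isChainN_iff e).2 ?_, fun C hC hsub => hsub.antisymm fun w hw => ?_⟩
  · rintro _ ⟨m, rfl⟩ _ ⟨n, rfl⟩
    simpa using (le_total m n).imp (res_suffix_res z) (res_suffix_res z)
  · have hlen : (res z (e w).length).length = (e w).length := res_length ..
    refine ⟨(e w).length, e.symm_apply_eq.2 ?_⟩
    have hcomp := (isChainN_iff e).1 hC _ (hsub (mem_range_self (e w).length)) w hw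
    rw [e.apply_symm_apply] at hcomp
    exact hcomp.elim (fun h => h.eq_of_length hlen) fun h => (h.eq_of_length hlen.symm).symm

end Skeleton

section Coordinates

open Filter PiNat

variable {X Y : Type*}

/-- A labelling of the nodes of `F` by finite sequences and of the points by infinite sequences,
under which the leaves are the cylinders. -/
structure Coordinates (F : FoliageTree X) where
  node : F.lt ≃r StrictSuffix (α := ℕ)
  point : X ≃ (ℕ → ℕ)
  leaf_eq : ∀ v, F.leaf v = point ⁻¹' listCylinder (node v)

lemma IsBaireFoliageTree.isLusinScheme [TopologicalSpace X] {F : FoliageTree X}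
    (hF : F.IsBaireFoliageTree) (e : F.lt ≃r StrictSuffix (α := ℕ)) :
    IsLusinScheme fun t => F.leaf (e.symm t) := by
  obtain ⟨-, hstrict, -, ⟨-, hbranch⟩, r, hr, hleaf⟩ := hF
  have hsplit : ∀ t, _ := fun t => hstrict (e.symm t) fun hmax =>
    hmax ⟨e.symm (0 :: t), e.symm.map_rel_iff.2 (strictSuffix_cons 0 t)⟩
  simp only [sons_eq_range e, e.apply_symm_apply, biUnion_range, forall_mem_range] at hsplit
  refine ⟨?_, fun t => (hsplit t).1, fun t i j hij => (hsplit t).2 i j ?_, fun z => ?_⟩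
  · rcases hr (e.symm []) with rfl | hlt
    · exact hleaf
    · have := (strictSuffix_iff_length_lt.1 (e.map_rel_iff.2 hlt)).2
      simp at this
  · simpa using hij
  · simpa only [biInter_range] using hbranch _ (isBranch_range_res e z)

lemma Coordinates.strictBranches {F : FoliageTree X} (C : F.Coordinates) : F.StrictBranches := by
  refine ⟨⟨C.node.symm []⟩, fun B hB => ?_⟩
  have hchain : IsChain (· <:+ ·) (C.node '' B) := by
    rintro _ ⟨v, hv, rfl⟩ _ ⟨w, hw, rfl⟩ -
    exact (isChainN_iff C.node).1 hB.1 v hv w hw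
  obtain ⟨z, hz⟩ := exists_iInter_listCylinder_eq_singleton hchain fun n => by
    simpa using hB.exists_le_length C.node (n + 1)
  refine ⟨C.point.symm z, ?_⟩
  rw [biInter_image] at hz
  simp_rw [C.leaf_eq, ← preimage_iInter₂, hz]
  ext p
  simp [Equiv.eq_symm_apply]

lemma Coordinates.locallyStrict {F : FoliageTree X} (C : F.Coordinates) : F.LocallyStrict := by
  intro v _
  simp only [sons_eq_range C.node, biUnion_range, forall_mem_range, C.leaf_eq,
    RelIso.apply_symm_apply]
  refine ⟨?_, fun i j hij => ?_⟩
  · ext p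
    simp
  · exact (pairwise_disjoint_listCylinder_cons _ (by simpa using hij)).preimage _

lemma Coordinates.isBaireFoliageTree [TopologicalSpace X] {F : FoliageTree X} (C : F.Coordinates)
    (hC : Continuous C.point) : F.IsBaireFoliageTree := by
  refine ⟨fun v => ?_, C.locallyStrict, ⟨C.node.trans strictSuffixRelIsoSeqLT⟩, C.strictBranches,
    C.node.symm [], fun v => ?_, ?_⟩
  · rw [C.leaf_eq]
    exact (isOpen_listCylinder _).preimage hC
  · refine or_iff_not_imp_left.2 fun hne => C.node.map_rel_iff.1 ?_
    rw [C.node.apply_symm_apply]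
    exact ⟨List.nil_suffix, fun h => hne (C.node.symm_apply_eq.2 h)⟩
  · simp [C.leaf_eq]

theorem isBaireFoliageTree_iff [TopologicalSpace X] {F : FoliageTree X} :
    F.IsBaireFoliageTree ↔ ∃ C : F.Coordinates, Continuous C.point := by
  refine ⟨fun hF => ?_, fun ⟨C, hC⟩ => C.isBaireFoliageTree hC⟩
  obtain ⟨e⟩ := hF.2.2.1
  let node := e.trans strictSuffixRelIsoSeqLT.symm
  obtain ⟨c, hc⟩ := (hF.isLusinScheme node).exists_equiv
  let C : F.Coordinates := ⟨node, c, fun v => by rw [← hc, node.symm_apply_apply]⟩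
  refine ⟨C, continuous_of_isOpen_preimage_listCylinder fun t => ?_⟩
  rw [← hc]
  exact hF.1 _

/-- The foliage tree on `ω^{<ω}` whose leaves are the cylinders, transported to `X` along `c`. -/
def cylinderTree (c : X → ℕ → ℕ) : FoliageTree X where
  Node := List ℕ
  lt := StrictSuffix
  lt_irrefl _ h := h.2 rfl
  lt_trans h h' := strictSuffix_iff_length_lt.2 ⟨h.1.trans h'.1,
    (strictSuffix_iff_length_lt.1 h).2.trans (strictSuffix_iff_length_lt.1 h').2⟩
  wellOrdered t := (strictSuffixPredecessorsIso t).toRelEmbedding.isWellOrder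
  leaf s := c ⁻¹' listCylinder s

/-- The tautological coordinates of the cylinder tree of a bijection. -/
def cylinderTreeCoordinates (c : X ≃ (ℕ → ℕ)) : (cylinderTree c).Coordinates :=
  ⟨RelIso.refl _, c, fun _ => rfl⟩

lemma piRefines_shoot_iff {F : FoliageTree X} {v : F.Node} {U : Set X} (hU : U.Nonempty)
    (hsons : (F.Sons v).Infinite) (hleaf : ∀ s ∈ F.Sons v, (F.leaf s).Nonempty) :
    PiRefines (F.shoot v) {U} ↔ {s ∈ F.Sons v | ¬F.leaf s ⊆ U}.Finite := by
  constructor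
  · intro h
    obtain ⟨_, ⟨C, -, hfin, rfl⟩, -, hsub⟩ := h U rfl hU
    refine hfin.subset fun s ⟨hs, hns⟩ => ⟨hs, fun hsC => hns ?_⟩
    exact (subset_biUnion_of_mem hsC).trans hsub
  · rintro hfin D hD -
    obtain rfl : D = U := hD
    let C := {s ∈ F.Sons v | F.leaf s ⊆ D}
    have hdiff : F.Sons v \ C = {s ∈ F.Sons v | ¬F.leaf s ⊆ D} := by
      ext s
      simp +contextual [C]
    have hC : (F.Sons v \ C).Finite := hdiff ▸ hfin
    refine ⟨_, ⟨C, sep_subset _ _, hC, rfl⟩, ?_, iUnion₂_subset fun s hs => hs.2⟩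
    obtain ⟨s, hs, hsC⟩ := (hsons.sdiff hfin).nonempty
    have hsD : F.leaf s ⊆ D := by_contra fun hns => hsC ⟨hs, hns⟩
    exact (hleaf s hs).mono (subset_biUnion_of_mem (u := F.leaf) (show s ∈ C from ⟨hs, hsD⟩))

namespace Coordinates

variable {F : FoliageTree X} {H : FoliageTree Y}

lemma piRefines_shoot_iff (C : F.Coordinates) {v : F.Node} {U : Set X} (hU : U.Nonempty) :
    PiRefines (F.shoot v) {U} ↔
      ∀ᶠ k in atTop, C.point ⁻¹' listCylinder (k :: C.node v) ⊆ U := by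
  have hinj := injective_symm_cons C.node v
  rw [FoliageTree.piRefines_shoot_iff hU, ← Nat.cofinite_eq_atTop, eventually_cofinite,
    ← Set.finite_image_iff hinj.injOn, sons_eq_range C.node]
  · have himage : {s ∈ range fun k => C.node.symm (k :: C.node v) | ¬F.leaf s ⊆ U} =
        (fun k => C.node.symm (k :: C.node v)) ''
          {k | ¬C.point ⁻¹' listCylinder (k :: C.node v) ⊆ U} := by
      ext s
      constructor
      · rintro ⟨⟨k, rfl⟩, hk⟩
        exact ⟨k, by simpa [C.leaf_eq] using hk, rfl⟩
      · rintro ⟨k, hk, rfl⟩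
        exact ⟨mem_range_self k, by simpa [C.leaf_eq] using hk⟩
    rw [himage]
  · rw [sons_eq_range C.node]
    exact infinite_range_of_injective hinj
  · intro s _
    rw [C.leaf_eq]
    exact (listCylinder_nonempty _).preimage C.point.surjective

lemma mem_scope_iff (C : F.Coordinates) {p : X} {v : F.Node} :
    v ∈ F.scope p ↔ res (C.point p) (C.node v).length = C.node v := by
  rw [scope, Set.mem_ofPred_eq, C.leaf_eq, mem_preimage, mem_listCylinder]

lemma mem_rise_iff (C : F.Coordinates) {p : X} {U : Set X} (hU : U.Nonempty) {n : ℕ} :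
    n ∈ F.rise p U ↔
      ∀ᶠ k in atTop, C.point ⁻¹' listCylinder (k :: res (C.point p) n) ⊆ U := by
  constructor
  · rintro ⟨v, hpv, hv, hn⟩
    rw [height_eq_length C.node, Nat.cast_inj] at hn
    rwa [← hn, C.mem_scope_iff.1 hpv, ← C.piRefines_shoot_iff hU]
  · refine fun h => ⟨C.node.symm (res (C.point p) n), ?_, ?_, ?_⟩
    · rw [C.mem_scope_iff, C.node.apply_symm_apply, res_length]
    · rwa [C.piRefines_shoot_iff hU, C.node.apply_symm_apply]
    · rw [height_eq_length C.node, C.node.apply_symm_apply, res_length]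

lemma mem_rise_of_shootsInto (C : F.Coordinates) (D : H.Coordinates) {f : Y → X} {y : Y} {n m : ℕ}
    (h : ShootsInto D.point (C.point ∘ f) y n m) {U : Set Y} {W : Set X} (hy : f y ∈ W)
    (hWU : f ⁻¹' W ⊆ U) (hm : m ∈ F.rise (f y) W) : n ∈ H.rise y U := by
  obtain ⟨φ, hφ, hsub⟩ := h
  rw [D.mem_rise_iff ⟨y, hWU hy⟩]
  rw [C.mem_rise_iff ⟨f y, hy⟩] at hm
  exact (hφ.eventually hm).mono fun j hj => (hsub j).trans ((preimage_mono hj).trans hWU)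

end Coordinates

end Coordinates

section Rise

open Filter Topology

variable {X : Type*} [TopologicalSpace X] {F : FoliageTree X}

lemma GrowsInto.rise_nonempty (hF : F.GrowsInto) (e : F.lt ≃r StrictSuffix (α := ℕ)) {p : X}
    {U : Set X} (hU : U ∈ 𝓝 p) : (F.rise p U).Nonempty :=
  let ⟨z, hz, hzU⟩ := hF p U hU
  ⟨(e z).length, z, hz, hzU, height_eq_length e z⟩

lemma growsInto_of_rise_nonempty (h : ∀ p, ∀ U ∈ 𝓝 p, (F.rise p U).Nonempty) : F.GrowsInto :=
  fun p U hU => let ⟨_, v, hv, hvU, _⟩ := h p U hU; ⟨v, hv, hvU⟩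

lemma IsPiTree.eventually_mem_rise (hF : F.IsPiTree) (hcof : PiRefines (cofin univ) F.Rise) {p : X}
    {U : Set X} (hU : U ∈ 𝓝 p) : ∀ᶠ m in atTop, m ∈ F.rise p U := by
  obtain ⟨C, -⟩ := isBaireFoliageTree_iff.1 hF.1
  have hfin := (piRefines_cofin_iff infinite_univ).1 hcof _ ⟨p, U, hU, rfl⟩
    (hF.2.rise_nonempty C.node hU)
  rwa [← compl_eq_univ_sdiff, ← mem_cofinite, Nat.cofinite_eq_atTop] at hfin

lemma IsPiTree.eventually_mem_rise_of_shootsInto (hF : F.IsPiTree)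
    (hcof : PiRefines (cofin univ) F.Rise) (C : F.Coordinates) {Y : Type*} [TopologicalSpace Y]
    {H : FoliageTree Y} (D : H.Coordinates) {f : Y → X} (hf : IsInducing f) {y : Y} {n : ℕ → ℕ}
    (hshoots : ∀ k, ∃ m ≥ k, ShootsInto D.point (C.point ∘ f) y (n k) m) {U : Set Y}
    (hU : U ∈ 𝓝 y) : ∀ᶠ k in atTop, n k ∈ H.rise y U := by
  obtain ⟨W, hW, hWU⟩ := hf.nhds_eq_comap y ▸ hU
  obtain ⟨N, hN⟩ := eventually_atTop.1 (hF.eventually_mem_rise hcof hW)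
  filter_upwards [eventually_ge_atTop N] with k hk
  obtain ⟨m, hm, hshoot⟩ := hshoots k
  exact C.mem_rise_of_shootsInto D hshoot (mem_of_mem_nhds hW) hWU (hN m (hk.trans hm))

lemma piRefines_cofin_range_rise {n : ℕ → ℕ} (hn : Function.Injective n)
    (h : ∀ p, ∀ U ∈ 𝓝 p, ∀ᶠ k in atTop, n k ∈ F.rise p U) :
    PiRefines (cofin (range n)) F.Rise := by
  rw [piRefines_cofin_iff (infinite_range_of_injective hn)]
  rintro _ ⟨p, U, hU, rfl⟩ -
  have hfin : {k | n k ∉ F.rise p U}.Finite := by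
    rw [← eventually_cofinite, Nat.cofinite_eq_atTop]
    exact h p U hU
  refine (hfin.image n).subset ?_
  rintro _ ⟨⟨k, rfl⟩, hk⟩
  exact mem_image_of_mem n hk

end Rise

end FoliageTree

/-- Corollary `cor.pi.tree.for.X-A` of the paper. -/
theorem exists_piTree_on_cocountable_subspace
    {X : Type u} [TopologicalSpace X] (F : FoliageTree X) (hF : F.IsPiTree)
    (hcof : PiRefines (cofin Set.univ) F.Rise) (A : Set X) (hA : A.Countable) :
    ∃ H : FoliageTree ↥(Aᶜ), H.IsPiTree ∧
      PiRefines (cofin {k | ∃ n : ℕ, k = 2 * n + 1}) H.Rise := by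
  obtain ⟨C, hC⟩ := FoliageTree.isBaireFoliageTree_iff.1 hF.1
  obtain ⟨d, hd, hshoots⟩ := exists_continuous_equiv_compl_shootsInto hC hA
  let D := FoliageTree.cylinderTreeCoordinates d
  have hodd : ∀ p, ∀ U ∈ nhds p, ∀ᶠ k in Filter.atTop,
      2 * k + 1 ∈ (FoliageTree.cylinderTree d).rise p U := fun p U hU =>
    hF.eventually_mem_rise_of_shootsInto hcof C D .subtypeVal (hshoots p) hU
  have hgrows : (FoliageTree.cylinderTree d).GrowsInto :=
    FoliageTree.growsInto_of_rise_nonempty fun p U hU =>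
      let ⟨k, hk⟩ := (hodd p U hU).exists
      ⟨2 * k + 1, hk⟩
  have hrange : {k | ∃ n : ℕ, k = 2 * n + 1} = range fun n => 2 * n + 1 := by
    simp only [range, eq_comm]
  refine ⟨_, ⟨D.isBaireFoliageTree hd, hgrows⟩, ?_⟩
  rw [hrange]
  exact FoliageTree.piRefines_cofin_range_rise (fun m n h => by simpa using h) hodd
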